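/- Let a* = ‖Q‖²_{L²} with Q the unique positive radial solution of −ΔQ + Q − Q³ = 0 on ℝ². Suppose w ∈ L¹(ℝ²) is even and satisfies ‖u‖²_{L²}‖∇u‖²_{L²} + (1/2)∬|u(x)|²|u(y)|² w(x−y) dx dy > 0 for all u ∈ H¹(ℝ²), u ≠ 0. Then ∫_{ℝ²} w ≥ −a*. -/

import Mathlib

open MeasureTheory

/-- The Laplacian on ℝ², as the trace of the second derivative. -/
noncomputable def lap2 (f : EuclideanSpace ℝ (Fin 2) → ℝ)
    (x : EuclideanSpace ℝ (Fin 2)) : ℝ :=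
  ∑ i : Fin 2,
    fderiv ℝ (fun y => fderiv ℝ f y (EuclideanSpace.single i (1 : ℝ))) x
      (EuclideanSpace.single i (1 : ℝ))

/-! In dimension two, replacing `u` by `u (a • ·)` scales both terms of the stability condition by
`a⁻²`, and as `a → 0` the potential `w` contracts to `(∫ w) δ₀`. Hence stability forces
`0 ≤ ‖u‖² ‖∇u‖² + ½ (∫ w) ‖u‖₄⁴` for all test functions `u`, and by mollification and cutoff also
for `u = Q`. Sharpness of the constant is read off from two virial identities: the equation for
`Q`, tested against `Q` and against `⟪x, ∇Q⟫`, gives `‖∇Q‖² = ‖Q‖² = ½ ‖Q‖₄⁴`, so the inequality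
becomes `0 ≤ ‖Q‖² (‖Q‖² + ∫ w)`. -/

open Filter Topology Set Module Metric
open scoped Convolution ContDiff Pointwise RealInnerProductSpace Gradient Laplacian

section Dilation

variable {E : Type*} [NormedAddCommGroup E] [NormedSpace ℝ E] [MeasurableSpace E]

/-- The energy `‖u‖²‖∇u‖² + ½ ∬ u(x)² u(y)² w(x - y)` in the stability condition. -/
noncomputable def stabilityEnergy (μ : Measure E) (w u : E → ℝ) : ℝ :=
  (∫ x, u x ^ 2 ∂μ) * (∫ x, ‖fderiv ℝ u x‖ ^ 2 ∂μ)
    + 1 / 2 * ∫ x, ∫ y, u x ^ 2 * u y ^ 2 * w (x - y) ∂μ ∂μ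

/-- The energy `‖u‖²‖∇u‖² + (c / 2) ‖u‖₄⁴`, whose nonnegativity for all `u` is a
Gagliardo–Nirenberg inequality. -/
noncomputable def gagliardoNirenbergEnergy (μ : Measure E) (c : ℝ) (u : E → ℝ) : ℝ :=
  (∫ x, u x ^ 2 ∂μ) * (∫ x, ‖fderiv ℝ u x‖ ^ 2 ∂μ) + 1 / 2 * (c * ∫ x, u x ^ 4 ∂μ)

/-- The self-interaction of the density `f` through the potential `w`, with `f` dilated to length
scale `a⁻¹` and the result normalised so as to stay finite as `a → 0`. -/
noncomputable def dilatedInteraction (μ : Measure E) (w f : E → ℝ) (a : ℝ) : ℝ :=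
  ∫ x, ∫ z, f x * f (x - a • z) * w z ∂μ ∂μ

theorem dilatedInteraction_zero (μ : Measure E) (w f : E → ℝ) :
    dilatedInteraction μ w f 0 = (∫ x, w x ∂μ) * ∫ x, f x ^ 2 ∂μ := by
  simp only [dilatedInteraction, zero_smul, sub_zero, integral_const_mul, integral_mul_const,
    ← sq, mul_comm]

variable [BorelSpace E] [FiniteDimensional ℝ E] {μ : Measure E} [μ.IsAddHaarMeasure]

theorem integral_comp_smul_interaction (w f : E → ℝ) (a : ℝ) :
    ∫ x, ∫ y, f (a • x) * f (a • y) * w (x - y) ∂μ ∂μ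
      = |(a ^ finrank ℝ E)⁻¹| * dilatedInteraction μ w f a := by
  have inner_eq (x : E) : ∫ y, f (a • x) * f (a • y) * w (x - y) ∂μ
      = ∫ z, f (a • x) * f (a • x - a • z) * w z ∂μ := by
    rw [← integral_sub_left_eq_self _ μ x]
    simp only [smul_sub, sub_sub_cancel]
  simp_rw [inner_eq]
  exact Measure.integral_comp_smul μ (fun x => ∫ z, f x * f (x - a • z) * w z ∂μ) a

theorem integral_norm_fderiv_comp_smul_sq (u : E → ℝ) (a : ℝ) :
    ∫ x, ‖fderiv ℝ (fun y => u (a • y)) x‖ ^ 2 ∂μ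
      = a ^ 2 * (|(a ^ finrank ℝ E)⁻¹| * ∫ x, ‖fderiv ℝ u x‖ ^ 2 ∂μ) := by
  simp only [fderiv_comp_smul, norm_smul, mul_pow, Real.norm_eq_abs, sq_abs, integral_const_mul]
  rw [Measure.integral_comp_smul μ (fun x => ‖fderiv ℝ u x‖ ^ 2) a, smul_eq_mul]

/- Only in dimension two do both terms scale with the same power of `a`. -/
theorem stabilityEnergy_comp_smul (hdim : finrank ℝ E = 2) (w u : E → ℝ) {a : ℝ} (ha : a ≠ 0) :
    stabilityEnergy μ w (fun x => u (a • x)) = (a ^ 2)⁻¹ *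
      ((∫ x, u x ^ 2 ∂μ) * (∫ x, ‖fderiv ℝ u x‖ ^ 2 ∂μ)
        + 1 / 2 * dilatedInteraction μ w (fun x => u x ^ 2) a) := by
  rw [stabilityEnergy, Measure.integral_comp_smul μ (fun x => u x ^ 2) a,
    integral_norm_fderiv_comp_smul_sq, integral_comp_smul_interaction w (fun x => u x ^ 2) a,
    hdim, abs_of_pos (by positivity), smul_eq_mul]
  field_simp

theorem continuous_dilatedInteraction {w f : E → ℝ} (hw : Integrable w μ) (hf : Integrable f μ)
    (hfc : Continuous f) {C : ℝ} (hC : ∀ x, ‖f x‖ ≤ C) :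
    Continuous (dilatedInteraction μ w f) := by
  have meas (a : ℝ) : AEStronglyMeasurable
      (fun p : E × E => f p.1 * f (p.1 - a • p.2) * w p.2) (μ.prod μ) :=
    (Continuous.aestronglyMeasurable (by fun_prop)).mul hw.aestronglyMeasurable.comp_snd
  have bound (a : ℝ) (p : E × E) :
      ‖f p.1 * f (p.1 - a • p.2) * w p.2‖ ≤ ‖f p.1‖ * (C * ‖w p.2‖) := by
    rw [norm_mul, norm_mul, mul_assoc]
    gcongr
    exact hC _
  have integrable_bound : Integrable (fun p : E × E => ‖f p.1‖ * (C * ‖w p.2‖)) (μ.prod μ) :=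
    hf.norm.mul_prod (hw.norm.const_mul C)
  have eq_integral_prod (a : ℝ) : dilatedInteraction μ w f a
      = ∫ p : E × E, f p.1 * f (p.1 - a • p.2) * w p.2 ∂μ.prod μ :=
    (integral_prod _ (integrable_bound.mono' (meas a) (ae_of_all _ (bound a)))).symm
  simp_rw [funext eq_integral_prod]
  exact continuous_of_dominated meas (fun a => ae_of_all _ (bound a)) integrable_bound
    (ae_of_all _ fun p => by fun_prop)

theorem gagliardoNirenbergEnergy_nonneg_of_stable (hdim : finrank ℝ E = 2) {w : E → ℝ}
    (hw : Integrable w μ)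
    (hstab : ∀ u : E → ℝ, ContDiff ℝ ∞ u → HasCompactSupport u → 0 ≤ stabilityEnergy μ w u)
    {u : E → ℝ} (hu : ContDiff ℝ ∞ u) (hc : HasCompactSupport u) :
    0 ≤ gagliardoNirenbergEnergy μ (∫ x, w x ∂μ) u := by
  let H (a : ℝ) : ℝ := (∫ x, u x ^ 2 ∂μ) * (∫ x, ‖fderiv ℝ u x‖ ^ 2 ∂μ)
    + 1 / 2 * dilatedInteraction μ w (fun x => u x ^ 2) a
  have hH_pos (a : ℝ) (ha : 0 < a) : 0 ≤ H a := by
    have h := hstab (fun x => u (a • x)) (hu.comp (contDiff_const_smul a))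
      (hc.comp_homeomorph (Homeomorph.smulOfNeZero a ha.ne'))
    rw [stabilityEnergy_comp_smul hdim w u ha.ne'] at h
    exact nonneg_of_mul_nonneg_right h (by positivity)
  have hu2 : Continuous fun x => u x ^ 2 := hu.continuous.pow 2
  have hc2 : HasCompactSupport fun x => u x ^ 2 :=
    hc.comp_left (g := fun t : ℝ => t ^ 2) (zero_pow two_ne_zero)
  obtain ⟨C, hC⟩ := hc2.exists_bound_of_continuous hu2
  have hH : Continuous H := continuous_const.add (continuous_const.mul
    (continuous_dilatedInteraction hw (hu2.integrable_of_hasCompactSupport hc2) hu2 hC))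
  have hH_zero : H 0 = gagliardoNirenbergEnergy μ (∫ x, w x ∂μ) u := by
    simp only [H, gagliardoNirenbergEnergy, dilatedInteraction_zero, ← pow_mul]
  rw [← hH_zero]
  exact ge_of_tendsto (hH.continuousWithinAt (s := Ioi 0))
    (eventually_nhdsWithin_of_forall hH_pos)

end Dilation

theorem memLp_natCast_iff_integrable_norm_pow {α F : Type*} [MeasurableSpace α] {μ : Measure α}
    [NormedAddCommGroup F] {f : α → F} (hf : AEStronglyMeasurable f μ) {k : ℕ} (hk : k ≠ 0) :
    MemLp f k μ ↔ Integrable (fun x => ‖f x‖ ^ k) μ := by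
  simpa using (integrable_norm_rpow_iff hf (Nat.cast_ne_zero.2 hk) (ENNReal.natCast_ne_top k)).symm

theorem tendsto_integral_norm_pow_of_dominated {α F : Type*} [MeasurableSpace α] {μ : Measure α}
    [NormedAddCommGroup F] {u : ℕ → α → F} {v : α → F} {b : α → ℝ} {k : ℕ} (hk : k ≠ 0)
    (hu : ∀ n, AEStronglyMeasurable (u n) μ) (hb : MemLp b k μ) (hle : ∀ n x, ‖u n x‖ ≤ b x)
    (hlim : ∀ x, Tendsto (fun n => u n x) atTop (𝓝 (v x))) :
    Tendsto (fun n => ∫ x, ‖u n x‖ ^ k ∂μ) atTop (𝓝 (∫ x, ‖v x‖ ^ k ∂μ)) := by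
  refine tendsto_integral_of_dominated_convergence (fun x => ‖b x‖ ^ k)
    (fun n => (hu n).norm.pow k) (hb.integrable_norm_pow hk) (fun n => ae_of_all _ fun x => ?_)
    (ae_of_all _ fun x => (hlim x).norm.pow k)
  rw [norm_pow, norm_norm]
  gcongr
  exact (hle n x).trans (le_abs_self _)

section DominatedConvergence

variable {E : Type*} [NormedAddCommGroup E] [NormedSpace ℝ E]

/-- Pointwise convergence of the `C¹` functions `u n` and of their derivatives to `v` and its
derivative, dominated by `b` and `d` respectively. It is the mode of convergence along which
energies built from `u` and `∇u` are continuous. -/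
structure DominatedC1Tendsto {F : Type*} [NormedAddCommGroup F] [NormedSpace ℝ F]
    (u : ℕ → E → F) (v : E → F) (b d : E → ℝ) : Prop where
  contDiff (n : ℕ) : ContDiff ℝ 1 (u n)
  norm_le (n : ℕ) (x : E) : ‖u n x‖ ≤ b x
  norm_fderiv_le (n : ℕ) (x : E) : ‖fderiv ℝ (u n) x‖ ≤ d x
  tendsto (x : E) : Tendsto (fun n => u n x) atTop (𝓝 (v x))
  tendsto_fderiv (x : E) : Tendsto (fun n => fderiv ℝ (u n) x) atTop (𝓝 (fderiv ℝ v x))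

theorem gagliardoNirenbergEnergy_nonneg_of_dominatedC1Tendsto [FiniteDimensional ℝ E]
    [MeasurableSpace E] [BorelSpace E] {μ : Measure E} {c : ℝ} {u : ℕ → E → ℝ} {v b d : E → ℝ}
    (h : DominatedC1Tendsto u v b d) (hb₂ : MemLp b 2 μ) (hb₄ : MemLp b 4 μ) (hd : MemLp d 2 μ)
    (hE : ∀ n, 0 ≤ gagliardoNirenbergEnergy μ c (u n)) :
    0 ≤ gagliardoNirenbergEnergy μ c v := by
  have tendsto_pow {k : ℕ} (hk : k ≠ 0) (hk_even : Even k) (hb : MemLp b k μ) :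
      Tendsto (fun n => ∫ x, u n x ^ k ∂μ) atTop (𝓝 (∫ x, v x ^ k ∂μ)) := by
    simpa only [Real.norm_eq_abs, hk_even.pow_abs] using tendsto_integral_norm_pow_of_dominated hk
      (fun n => (h.contDiff n).continuous.aestronglyMeasurable) hb h.norm_le h.tendsto
  have tendsto_grad : Tendsto (fun n => ∫ x, ‖fderiv ℝ (u n) x‖ ^ 2 ∂μ) atTop
      (𝓝 (∫ x, ‖fderiv ℝ v x‖ ^ 2 ∂μ)) :=
    tendsto_integral_norm_pow_of_dominated two_ne_zero
      (fun n => ((h.contDiff n).continuous_fderiv one_ne_zero).aestronglyMeasurable) hd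
      h.norm_fderiv_le h.tendsto_fderiv
  exact ge_of_tendsto' (((tendsto_pow two_ne_zero even_two hb₂).mul tendsto_grad).add
    (((tendsto_pow four_ne_zero (by decide) hb₄).const_mul c).const_mul (1 / 2))) hE

end DominatedConvergence

section Mollification

variable {E : Type*} [NormedAddCommGroup E]

variable (E) in
/-- A sequence of smooth bump functions whose supports shrink to the origin. -/
noncomputable def shrinkingBump (n : ℕ) : ContDiffBump (0 : E) where
  rIn := 1 / ((n : ℝ) + 1) / 2
  rOut := 1 / ((n : ℝ) + 1)
  rIn_pos := by positivity
  rIn_lt_rOut := half_lt_self (by positivity)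

theorem shrinkingBump_rOut_le_one (n : ℕ) : (shrinkingBump E n).rOut ≤ 1 :=
  (div_le_one (by positivity)).2 (le_add_of_nonneg_left n.cast_nonneg)

variable [NormedSpace ℝ E] [HasContDiffBump E] [MeasurableSpace E]
  {F : Type*} [NormedAddCommGroup F] [NormedSpace ℝ F]

/-- The regularisation of `g` by convolution with the normalised `n`-th shrinking bump. -/
noncomputable def mollify (μ : Measure E) (n : ℕ) (g : E → F) : E → F :=
  (shrinkingBump E n).normed μ ⋆[ContinuousLinearMap.lsmul ℝ ℝ, μ] g

variable [BorelSpace E] [FiniteDimensional ℝ E] {μ : Measure E} [μ.IsAddHaarMeasure]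

theorem support_mollify_subset (n : ℕ) (g : E → F) :
    Function.support (mollify μ n g) ⊆ closedBall 0 1 + tsupport g := by
  refine (support_convolution_subset _).trans (add_subset_add ?_ (subset_tsupport g))
  rw [(shrinkingBump E n).support_normed_eq]
  exact ball_subset_closedBall.trans (closedBall_subset_closedBall (shrinkingBump_rOut_le_one n))

theorem norm_mollify_le {g : E → F} {C : ℝ} (hC : ∀ x, ‖g x‖ ≤ C) (n : ℕ) (x : E) :
    ‖mollify μ n g x‖ ≤ C := by
  let φ := shrinkingBump E n
  calc ‖mollify μ n g x‖ ≤ ∫ y, φ.normed μ y * C ∂μ := by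
        refine norm_integral_le_of_norm_le (φ.integrable_normed.mul_const C)
          (ae_of_all _ fun y => ?_)
        rw [ContinuousLinearMap.lsmul_apply, norm_smul, Real.norm_of_nonneg (φ.nonneg_normed y)]
        exact mul_le_mul_of_nonneg_left (hC _) (φ.nonneg_normed y)
    _ = C := by rw [integral_mul_const, φ.integral_normed, one_mul]

theorem norm_mollify_le_indicator {g : E → F} {C : ℝ} (hC : ∀ x, ‖g x‖ ≤ C) {K : Set E}
    (hK : closedBall 0 1 + tsupport g ⊆ K) (n : ℕ) (x : E) :
    ‖mollify μ n g x‖ ≤ K.indicator (fun _ => C) x := by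
  by_cases hx : x ∈ K
  · rw [indicator_of_mem hx]
    exact norm_mollify_le hC n x
  · rw [indicator_of_notMem hx, Function.notMem_support.1 fun h =>
      hx (hK (support_mollify_subset n g h)), norm_zero]

theorem contDiff_mollify {g : E → F} (hg : LocallyIntegrable g μ) (n : ℕ) :
    ContDiff ℝ ∞ (mollify μ n g) :=
  (shrinkingBump E n).hasCompactSupport_normed.contDiff_convolution_left _
    (shrinkingBump E n).contDiff_normed hg

theorem fderiv_mollify {v : E → F} (hv : ContDiff ℝ 1 v) (hc : HasCompactSupport v) (n : ℕ) :
    fderiv ℝ (mollify μ n v) = mollify μ n (fderiv ℝ v) := by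
  ext1 x
  exact (hc.hasFDerivAt_convolution_right (ContinuousLinearMap.lsmul ℝ ℝ)
    (shrinkingBump E n).continuous_normed.locallyIntegrable hv x).fderiv

variable [CompleteSpace F]

theorem tendsto_mollify {g : E → F} (hg : Continuous g) (x : E) :
    Tendsto (fun n => mollify μ n g x) atTop (𝓝 (g x)) :=
  ContDiffBump.convolution_tendsto_right_of_continuous
    tendsto_one_div_add_atTop_nhds_zero_nat hg x

theorem dominatedC1Tendsto_mollify {v : E → F} (hv : ContDiff ℝ 1 v) (hc : HasCompactSupport v) :
    ∃ A B : ℝ, DominatedC1Tendsto (fun n => mollify μ n v) v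
      ((closedBall 0 1 + tsupport v).indicator fun _ => A)
      ((closedBall 0 1 + tsupport v).indicator fun _ => B) := by
  have hv' : Continuous (fderiv ℝ v) := hv.continuous_fderiv one_ne_zero
  obtain ⟨A, hA⟩ := hc.exists_bound_of_continuous hv.continuous
  obtain ⟨B, hB⟩ := (hc.fderiv ℝ).exists_bound_of_continuous hv'
  refine ⟨A, B, fun n => ?_, norm_mollify_le_indicator hA subset_rfl, fun n x => ?_,
    tendsto_mollify hv.continuous, fun x => ?_⟩
  · exact (contDiff_mollify hv.continuous.locallyIntegrable n).of_le (mod_cast le_top)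
  · rw [fderiv_mollify hv hc]
    exact norm_mollify_le_indicator hB (add_subset_add_left (tsupport_fderiv_subset ℝ)) n x
  · simp_rw [fderiv_mollify hv hc]
    exact tendsto_mollify hv' x

theorem gagliardoNirenbergEnergy_nonneg_of_contDiff_one {c : ℝ}
    (hE : ∀ u : E → ℝ, ContDiff ℝ ∞ u → HasCompactSupport u → 0 ≤ gagliardoNirenbergEnergy μ c u)
    {v : E → ℝ} (hv : ContDiff ℝ 1 v) (hc : HasCompactSupport v) :
    0 ≤ gagliardoNirenbergEnergy μ c v := by
  have hK : IsCompact (closedBall 0 1 + tsupport v) := (isCompact_closedBall 0 1).add hc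
  have memLp_indicator (C : ℝ) (p : ENNReal) :
      MemLp ((closedBall 0 1 + tsupport v).indicator fun _ => C) p μ :=
    memLp_indicator_const p hK.measurableSet C (.inr hK.measure_lt_top.ne)
  obtain ⟨A, B, h⟩ := dominatedC1Tendsto_mollify (μ := μ) hv hc
  refine gagliardoNirenbergEnergy_nonneg_of_dominatedC1Tendsto h (memLp_indicator A 2)
    (memLp_indicator A 4) (memLp_indicator B 2) fun n => ?_
  exact hE _ (contDiff_mollify hv.continuous.locallyIntegrable n)
    (.of_support_subset_isCompact hK (support_mollify_subset n v))

end Mollification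

section Cutoff

theorem tendsto_one_div_add_smul_zero {E : Type*} [NormedAddCommGroup E] [NormedSpace ℝ E]
    (x : E) : Tendsto (fun n : ℕ => (1 / ((n : ℝ) + 1)) • x) atTop (𝓝 0) := by
  simpa only [zero_smul] using
    (tendsto_one_div_add_atTop_nhds_zero_nat (𝕜 := ℝ)).smul_const x

variable (E : Type*) [NormedAddCommGroup E] [NormedSpace ℝ E] [HasContDiffBump E]

/-- Smooth cutoff functions increasing to the whole space: equal to `1` on the ball of radius
`n + 1`, and supported in the ball of twice that radius. -/
noncomputable def cutoff (n : ℕ) (x : E) : ℝ :=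
  (default : ContDiffBump (0 : E)) ((1 / ((n : ℝ) + 1)) • x)

theorem contDiff_cutoff (n : ℕ) : ContDiff ℝ 1 (cutoff E n) :=
  (ContDiffBump.contDiff _).comp (contDiff_const_smul _)

theorem hasCompactSupport_cutoff [FiniteDimensional ℝ E] (n : ℕ) :
    HasCompactSupport (cutoff E n) :=
  (ContDiffBump.hasCompactSupport _).comp_homeomorph
    (Homeomorph.smulOfNeZero (1 / ((n : ℝ) + 1)) (by positivity))

variable {E}

theorem norm_cutoff_le_one (n : ℕ) (x : E) : ‖cutoff E n x‖ ≤ 1 :=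
  (Real.norm_of_nonneg (ContDiffBump.nonneg _)).trans_le (ContDiffBump.le_one _)

theorem tendsto_cutoff (x : E) : Tendsto (fun n => cutoff E n x) atTop (𝓝 1) := by
  have h := ((default : ContDiffBump (0 : E)).continuous.tendsto 0).comp
    (tendsto_one_div_add_smul_zero x)
  rwa [ContDiffBump.one_of_mem_closedBall _
    (mem_closedBall_self (ContDiffBump.rIn_pos _).le)] at h

theorem fderiv_cutoff (n : ℕ) (x : E) :
    fderiv ℝ (cutoff E n) x = (1 / ((n : ℝ) + 1)) •
      fderiv ℝ (default : ContDiffBump (0 : E)) ((1 / ((n : ℝ) + 1)) • x) :=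
  fderiv_comp_smul (𝕜 := ℝ) (f := (default : ContDiffBump (0 : E))) _

theorem tendsto_fderiv_cutoff (x : E) :
    Tendsto (fun n => fderiv ℝ (cutoff E n) x) atTop (𝓝 0) := by
  simp_rw [fderiv_cutoff]
  have hcont : Continuous (fderiv ℝ (default : ContDiffBump (0 : E))) :=
    (ContDiffBump.contDiff _ : ContDiff ℝ 1 _).continuous_fderiv one_ne_zero
  simpa only [zero_smul, Function.comp_def] using
    (tendsto_one_div_add_atTop_nhds_zero_nat (𝕜 := ℝ)).smul
      ((hcont.tendsto 0).comp (tendsto_one_div_add_smul_zero x))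

theorem exists_norm_fderiv_cutoff_le [FiniteDimensional ℝ E] :
    ∃ C : ℝ, ∀ n (x : E), ‖fderiv ℝ (cutoff E n) x‖ * (1 + ‖x‖) ≤ C := by
  let φ : ContDiffBump (0 : E) := default
  have hcont : Continuous (fderiv ℝ φ) :=
    (φ.contDiff : ContDiff ℝ 1 φ).continuous_fderiv one_ne_zero
  obtain ⟨C, hC⟩ := ((φ.hasCompactSupport.fderiv ℝ).smul_left
    (f := fun x : E => 1 + ‖x‖)).exists_bound_of_continuous (by fun_prop)
  refine ⟨C, fun n x => ?_⟩
  let a : ℝ := 1 / ((n : ℝ) + 1)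
  have ha : 0 ≤ a := by positivity
  have ha_le : a ≤ 1 := (div_le_one (by positivity)).2 (le_add_of_nonneg_left n.cast_nonneg)
  calc ‖fderiv ℝ (cutoff E n) x‖ * (1 + ‖x‖)
      = (a + ‖a • x‖) * ‖fderiv ℝ φ (a • x)‖ := by
        rw [fderiv_cutoff, norm_smul, norm_smul, Real.norm_of_nonneg ha]
        ring
    _ ≤ (1 + ‖a • x‖) * ‖fderiv ℝ φ (a • x)‖ := by gcongr
    _ = ‖(1 + ‖a • x‖) • fderiv ℝ φ (a • x)‖ := (norm_smul_of_nonneg (by positivity) _).symm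
    _ ≤ C := hC (a • x)

theorem dominatedC1Tendsto_cutoff_smul [FiniteDimensional ℝ E] {F : Type*} [NormedAddCommGroup F]
    [NormedSpace ℝ F] {v : E → F} (hv : ContDiff ℝ 1 v) :
    ∃ C : ℝ, DominatedC1Tendsto (fun n x => cutoff E n x • v x) v
      (fun x => ‖v x‖) (fun x => ‖fderiv ℝ v x‖ + C * ‖v x‖) := by
  obtain ⟨C, hC⟩ := exists_norm_fderiv_cutoff_le (E := E)
  have norm_fderiv_le (n : ℕ) (x : E) : ‖fderiv ℝ (cutoff E n) x‖ ≤ C :=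
    (le_mul_of_one_le_right (norm_nonneg _) (le_add_of_nonneg_right (norm_nonneg x))).trans
      (hC n x)
  have fderiv_smul (n : ℕ) (x : E) : fderiv ℝ (fun y => cutoff E n y • v y) x
      = cutoff E n x • fderiv ℝ v x + (fderiv ℝ (cutoff E n) x).smulRight (v x) :=
    fderiv_fun_smul ((contDiff_cutoff E n).differentiable one_ne_zero x)
      (hv.differentiable one_ne_zero x)
  refine ⟨C, fun n => (contDiff_cutoff E n).smul hv, fun n x => ?_, fun n x => ?_, fun x => ?_,
    fun x => ?_⟩
  · rw [norm_smul]
    exact mul_le_of_le_one_left (norm_nonneg _) (norm_cutoff_le_one n x)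
  · rw [fderiv_smul]
    refine (norm_add_le _ _).trans (add_le_add ?_ ?_)
    · rw [norm_smul]
      exact mul_le_of_le_one_left (norm_nonneg _) (norm_cutoff_le_one n x)
    · rw [ContinuousLinearMap.norm_smulRight_apply]
      exact mul_le_mul_of_nonneg_right (norm_fderiv_le n x) (norm_nonneg _)
  · simpa only [one_smul] using (tendsto_cutoff x).smul_const (v x)
  · have hsmulRight := ((ContinuousLinearMap.smulRightL ℝ E F).flip (v x)).continuous.tendsto 0
      |>.comp (tendsto_fderiv_cutoff x)
    simp_rw [fderiv_smul]
    simpa using ((tendsto_cutoff x).smul_const (fderiv ℝ v x)).add hsmulRight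

theorem gagliardoNirenbergEnergy_nonneg_of_memLp [FiniteDimensional ℝ E] [MeasurableSpace E]
    [BorelSpace E] {μ : Measure E} {c : ℝ}
    (hE : ∀ u : E → ℝ, ContDiff ℝ 1 u → HasCompactSupport u → 0 ≤ gagliardoNirenbergEnergy μ c u)
    {v : E → ℝ} (hv : ContDiff ℝ 1 v) (hv₂ : MemLp v 2 μ) (hv₄ : MemLp v 4 μ)
    (hv' : MemLp (fderiv ℝ v) 2 μ) :
    0 ≤ gagliardoNirenbergEnergy μ c v := by
  obtain ⟨C, h⟩ := dominatedC1Tendsto_cutoff_smul hv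
  exact gagliardoNirenbergEnergy_nonneg_of_dominatedC1Tendsto h hv₂.norm hv₄.norm
    (hv'.norm.add (hv₂.norm.const_mul C))
    fun n => hE _ (h.contDiff n) (hasCompactSupport_cutoff E n).smul_right

end Cutoff

section Divergence

variable {E : Type*} [NormedAddCommGroup E] [InnerProductSpace ℝ E]

/-- The divergence of a vector field, as the trace of its derivative. -/
noncomputable def divergence (V : E → E) (x : E) : ℝ :=
  LinearMap.trace ℝ E (fderiv ℝ V x)

theorem divergence_eq_sum_inner {ι : Type*} [Fintype ι] (b : OrthonormalBasis ι ℝ E) (V : E → E)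
    (x : E) : divergence V x = ∑ i, ⟪b i, fderiv ℝ V x (b i)⟫ :=
  LinearMap.trace_eq_sum_inner _ b

theorem divergence_add {V W : E → E} {x : E} (hV : DifferentiableAt ℝ V x)
    (hW : DifferentiableAt ℝ W x) :
    divergence (fun y => V y + W y) x = divergence V x + divergence W x := by
  rw [divergence, fderiv_fun_add hV hW]
  exact map_add _ _ _

variable [FiniteDimensional ℝ E]

theorem divergence_smul {f : E → ℝ} {V : E → E} {x : E} (hf : DifferentiableAt ℝ f x)
    (hV : DifferentiableAt ℝ V x) :
    divergence (fun y => f y • V y) x = f x * divergence V x + fderiv ℝ f x (V x) := by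
  rw [divergence, fderiv_fun_smul hf hV, ContinuousLinearMap.toLinearMap_add, map_add,
    ContinuousLinearMap.toLinearMap_smul, map_smul, smul_eq_mul]
  congr 1
  exact LinearMap.trace_smulRight (fderiv ℝ f x : E →ₗ[ℝ] ℝ) (V x)

theorem divergence_id (x : E) : divergence (fun y : E => y) x = finrank ℝ E := by
  rw [divergence, fderiv_fun_id]
  exact LinearMap.trace_id ℝ E

theorem continuous_divergence {V : E → E} (hV : ContDiff ℝ 1 V) : Continuous (divergence V) := by
  simp_rw [funext (divergence_eq_sum_inner (stdOrthonormalBasis ℝ E) V)]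
  have := hV.continuous_fderiv one_ne_zero
  fun_prop

variable [MeasurableSpace E] [BorelSpace E] {μ : Measure E} [μ.IsAddHaarMeasure]

theorem integral_fderiv_apply_eq_zero {f : E → ℝ} (hf : ContDiff ℝ 1 f)
    (hc : HasCompactSupport f) (v : E) : ∫ x, fderiv ℝ f x v ∂μ = 0 := by
  have hf' : Continuous fun x => fderiv ℝ f x v :=
    (hf.continuous_fderiv one_ne_zero).clm_apply continuous_const
  have hint := hf'.integrable_of_hasCompactSupport (μ := μ) (hc.fderiv_apply ℝ v)
  simpa using integral_mul_fderiv_eq_neg_fderiv_mul_of_integrable (μ := μ) (v := v)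
    (f := fun _ => (1 : ℝ)) (g := f) (by simp) (by simpa using hint)
    (by simpa using hf.continuous.integrable_of_hasCompactSupport hc) (by simp)
    (fun x _ => hf.differentiable one_ne_zero x)

theorem integral_divergence_eq_zero_of_hasCompactSupport {V : E → E} (hV : ContDiff ℝ 1 V)
    (hc : HasCompactSupport V) : ∫ x, divergence V x ∂μ = 0 := by
  let b := stdOrthonormalBasis ℝ E
  have hV_inner (i) : ContDiff ℝ 1 fun x => ⟪b i, V x⟫ := contDiff_const.inner ℝ hV
  have hc_inner (i) : HasCompactSupport fun x => ⟪b i, V x⟫ :=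
    hc.comp_left (g := fun v => ⟪b i, v⟫) (inner_zero_right _)
  have divergence_eq (x : E) : divergence V x = ∑ i, fderiv ℝ (fun y => ⟪b i, V y⟫) x (b i) := by
    rw [divergence_eq_sum_inner b]
    refine Finset.sum_congr rfl fun i _ => ?_
    rw [fderiv_inner_apply ℝ (differentiableAt_const _) (hV.differentiable one_ne_zero x)]
    simp
  simp_rw [divergence_eq]
  rw [integral_finsetSum _ fun i _ => Continuous.integrable_of_hasCompactSupport
    (((hV_inner i).continuous_fderiv one_ne_zero).clm_apply continuous_const)
    ((hc_inner i).fderiv_apply ℝ _)]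
  exact Finset.sum_eq_zero fun i _ => integral_fderiv_apply_eq_zero (hV_inner i) (hc_inner i) _

theorem integral_mul_divergence_eq_neg {f : E → ℝ} {V : E → E} (hf : ContDiff ℝ 1 f)
    (hV : ContDiff ℝ 1 V) (hc : HasCompactSupport f) :
    ∫ x, f x * divergence V x ∂μ = -∫ x, fderiv ℝ f x (V x) ∂μ := by
  have hmul : Integrable (fun x => f x * divergence V x) μ :=
    (hf.continuous.mul (continuous_divergence hV)).integrable_of_hasCompactSupport hc.mul_right
  have hfderiv : Integrable (fun x => fderiv ℝ f x (V x)) μ :=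
    ((hf.continuous_fderiv one_ne_zero).clm_apply hV.continuous).integrable_of_hasCompactSupport
      ((hc.fderiv ℝ).mono fun x hx h => hx (by simp [h]))
  rw [eq_neg_iff_add_eq_zero, ← integral_add hmul hfderiv,
    ← integral_divergence_eq_zero_of_hasCompactSupport (μ := μ) (hf.smul hV) hc.smul_right]
  exact integral_congr_ae (ae_of_all _ fun x => (divergence_smul
    (hf.differentiable one_ne_zero x) (hV.differentiable one_ne_zero x)).symm)

/- The weight is what the cutoff argument can afford, as `‖∇χₙ x‖ ≤ C / (1 + ‖x‖)`. -/
theorem integral_divergence_eq_zero {V : E → E} (hV : ContDiff ℝ 1 V)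
    (hint : Integrable (fun x => ‖V x‖ / (1 + ‖x‖)) μ) (hdiv : Integrable (divergence V) μ) :
    ∫ x, divergence V x ∂μ = 0 := by
  obtain ⟨C, hC⟩ := exists_norm_fderiv_cutoff_le (E := E)
  have tendsto_mul : Tendsto (fun n => ∫ x, cutoff E n x * divergence V x ∂μ) atTop
      (𝓝 (∫ x, divergence V x ∂μ)) := by
    refine tendsto_integral_of_dominated_convergence (fun x => ‖divergence V x‖)
      (fun n => (contDiff_cutoff E n).continuous.aestronglyMeasurable.mul
        hdiv.aestronglyMeasurable) hdiv.norm (fun n => ae_of_all _ fun x => ?_)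
      (ae_of_all _ fun x => ?_)
    · rw [norm_mul]
      exact mul_le_of_le_one_left (norm_nonneg _) (norm_cutoff_le_one n x)
    · simpa only [one_mul] using (tendsto_cutoff x).mul_const (divergence V x)
  have tendsto_fderiv : Tendsto (fun n => ∫ x, fderiv ℝ (cutoff E n) x (V x) ∂μ) atTop
      (𝓝 (∫ _, (0 : ℝ) ∂μ)) := by
    refine tendsto_integral_of_dominated_convergence (fun x => C * (‖V x‖ / (1 + ‖x‖)))
      (fun n => (((contDiff_cutoff E n).continuous_fderiv one_ne_zero).clm_apply
        hV.continuous).aestronglyMeasurable) (hint.const_mul C)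
      (fun n => ae_of_all _ fun x => ?_) (ae_of_all _ fun x => ?_)
    · calc ‖fderiv ℝ (cutoff E n) x (V x)‖
          ≤ ‖fderiv ℝ (cutoff E n) x‖ * ‖V x‖ := (fderiv ℝ (cutoff E n) x).le_opNorm _
        _ = ‖fderiv ℝ (cutoff E n) x‖ * (1 + ‖x‖) * (‖V x‖ / (1 + ‖x‖)) := by field_simp
        _ ≤ C * (‖V x‖ / (1 + ‖x‖)) := by gcongr; exact hC n x
    · simpa only [Function.comp_def, ContinuousLinearMap.apply_apply,
        zero_apply] using
        ((ContinuousLinearMap.apply ℝ ℝ (V x)).continuous.tendsto 0).comp (tendsto_fderiv_cutoff x)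
  have integral_mul_eq (n : ℕ) := integral_mul_divergence_eq_neg (μ := μ) (contDiff_cutoff E n) hV
    (hasCompactSupport_cutoff E n)
  simp only [integral_mul_eq] at tendsto_mul
  rw [tendsto_nhds_unique tendsto_mul tendsto_fderiv.neg, integral_zero, neg_zero]

end Divergence


section Gradient

variable {E : Type*} [NormedAddCommGroup E] [InnerProductSpace ℝ E] [CompleteSpace E]

theorem norm_gradient (f : E → ℝ) (x : E) : ‖∇ f x‖ = ‖fderiv ℝ f x‖ :=
  LinearIsometryEquiv.norm_map _ _

theorem contDiff_gradient {u : E → ℝ} (hu : ContDiff ℝ 2 u) : ContDiff ℝ 1 (∇ u) :=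
  (InnerProductSpace.toDual ℝ E).symm.contDiff.comp (hu.fderiv_right (m := 1) (by norm_num))

theorem inner_fderiv_gradient {u : E → ℝ} (hu : ContDiff ℝ 2 u) (x v w : E) :
    ⟪fderiv ℝ (∇ u) x v, w⟫ = fderiv ℝ (fderiv ℝ u) x v w := by
  have differentiableAt_fderiv : DifferentiableAt ℝ (fderiv ℝ u) x :=
    (hu.fderiv_right (m := 1) (by norm_num)).differentiable one_ne_zero x
  have h : fderiv ℝ (fun y => ⟪∇ u y, w⟫) x v = fderiv ℝ (fun y => fderiv ℝ u y w) x v := by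
    simp only [inner_gradient_left]
  rw [fderiv_inner_apply ℝ ((contDiff_gradient hu).differentiable one_ne_zero x)
    (differentiableAt_const _), fderiv_clm_apply differentiableAt_fderiv
    (differentiableAt_const _)] at h
  simpa using h

theorem inner_fderiv_gradient_comm {u : E → ℝ} (hu : ContDiff ℝ 2 u) (x v w : E) :
    ⟪fderiv ℝ (∇ u) x v, w⟫ = ⟪v, fderiv ℝ (∇ u) x w⟫ := by
  rw [inner_fderiv_gradient hu, real_inner_comm, inner_fderiv_gradient hu]
  exact hu.contDiffAt.isSymmSndFDerivAt (by simp) v w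

end Gradient

section Virial

variable {E : Type*} [NormedAddCommGroup E] [InnerProductSpace ℝ E] [FiniteDimensional ℝ E]

theorem divergence_gradient {u : E → ℝ} (hu : ContDiff ℝ 2 u) (x : E) :
    divergence (∇ u) x = Δ u x := by
  rw [divergence_eq_sum_inner (stdOrthonormalBasis ℝ E),
    InnerProductSpace.laplacian_eq_iteratedFDeriv_stdOrthonormalBasis]
  refine Finset.sum_congr rfl fun i _ => ?_
  rw [real_inner_comm, inner_fderiv_gradient hu, iteratedFDeriv_two_apply]
  rfl

theorem divergence_smul_gradient {u : E → ℝ} (hu : ContDiff ℝ 2 u) (x : E) :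
    divergence (fun y => u y • ∇ u y) x = ‖∇ u x‖ ^ 2 + u x * Δ u x := by
  rw [divergence_smul (hu.differentiable two_ne_zero x)
    ((contDiff_gradient hu).differentiable one_ne_zero x), divergence_gradient hu,
    ← inner_gradient_left, real_inner_self_eq_norm_sq, add_comm]

/-- The vector field `⟪x, ∇u⟫ ∇u + (F(u) - ½‖∇u‖²) x` whose divergence yields the Pohozaev identity
for `Δu + f(u) = 0`, where `F` is a primitive of `f`. -/
noncomputable def pohozaevField (F : ℝ → ℝ) (u : E → ℝ) (x : E) : E :=
  ⟪x, ∇ u x⟫ • ∇ u x + (F (u x) - 1 / 2 * ‖∇ u x‖ ^ 2) • x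

theorem contDiff_pohozaevField {F : ℝ → ℝ} {u : E → ℝ} (hF : ContDiff ℝ 1 F)
    (hu : ContDiff ℝ 2 u) : ContDiff ℝ 1 (pohozaevField F u) := by
  have hgrad : ContDiff ℝ 1 (∇ u) := contDiff_gradient hu
  have hu₁ : ContDiff ℝ 1 u := hu.of_le one_le_two
  exact ((contDiff_id.inner ℝ hgrad).smul hgrad).add
    (((hF.comp hu₁).sub (contDiff_const.mul (hgrad.norm_sq ℝ))).smul contDiff_id)

theorem norm_pohozaevField_le (F : ℝ → ℝ) (u : E → ℝ) (x : E) :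
    ‖pohozaevField F u x‖ ≤ (‖F (u x)‖ + 3 / 2 * ‖∇ u x‖ ^ 2) * ‖x‖ := by
  have h_inner : ‖⟪x, ∇ u x⟫ • ∇ u x‖ ≤ ‖∇ u x‖ ^ 2 * ‖x‖ := by
    rw [norm_smul]
    calc ‖⟪x, ∇ u x⟫‖ * ‖∇ u x‖ ≤ ‖x‖ * ‖∇ u x‖ * ‖∇ u x‖ := by
          gcongr
          exact norm_inner_le_norm x (∇ u x)
      _ = ‖∇ u x‖ ^ 2 * ‖x‖ := by ring
  have h_radial : ‖(F (u x) - 1 / 2 * ‖∇ u x‖ ^ 2) • x‖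
      ≤ (‖F (u x)‖ + 1 / 2 * ‖∇ u x‖ ^ 2) * ‖x‖ := by
    rw [norm_smul]
    gcongr
    refine (norm_sub_le _ _).trans_eq ?_
    rw [Real.norm_of_nonneg (by positivity : 0 ≤ 1 / 2 * ‖∇ u x‖ ^ 2)]
  calc ‖pohozaevField F u x‖
      ≤ ‖∇ u x‖ ^ 2 * ‖x‖ + (‖F (u x)‖ + 1 / 2 * ‖∇ u x‖ ^ 2) * ‖x‖ :=
        (norm_add_le _ _).trans (add_le_add h_inner h_radial)
    _ = (‖F (u x)‖ + 3 / 2 * ‖∇ u x‖ ^ 2) * ‖x‖ := by ring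

theorem fderiv_norm_gradient_sq {u : E → ℝ} (hu : ContDiff ℝ 2 u) (x v : E) :
    fderiv ℝ (fun y => ‖∇ u y‖ ^ 2) x v = 2 * ⟪fderiv ℝ (∇ u) x (∇ u x), v⟫ := by
  have hgrad : HasFDerivAt (∇ u) (fderiv ℝ (∇ u) x) x :=
    ((contDiff_gradient hu).differentiable one_ne_zero x).hasFDerivAt
  rw [hgrad.norm_sq.fderiv, inner_fderiv_gradient_comm hu]
  simp

theorem divergence_pohozaevField {F : ℝ → ℝ} {u : E → ℝ} (hF : ContDiff ℝ 1 F)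
    (hu : ContDiff ℝ 2 u) (x : E) :
    divergence (pohozaevField F u) x
      = (1 - finrank ℝ E / 2) * ‖∇ u x‖ ^ 2 + finrank ℝ E * F (u x)
        + ⟪x, ∇ u x⟫ * (Δ u x + deriv F (u x)) := by
  have hgrad : DifferentiableAt ℝ (∇ u) x :=
    (contDiff_gradient hu).differentiable one_ne_zero x
  have hF' : DifferentiableAt ℝ F (u x) := hF.differentiable one_ne_zero _
  have hu' : DifferentiableAt ℝ u x := hu.differentiable two_ne_zero x
  have h_inner : DifferentiableAt ℝ (fun y => ⟪y, ∇ u y⟫) x :=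
    differentiableAt_fun_id.inner ℝ hgrad
  have h_norm : DifferentiableAt ℝ (fun y => ‖∇ u y‖ ^ 2) x := hgrad.norm_sq ℝ
  have hasFDerivAt_density : HasFDerivAt (fun y => F (u y) - 1 / 2 * ‖∇ u y‖ ^ 2)
      (deriv F (u x) • fderiv ℝ u x - (1 / 2 : ℝ) • fderiv ℝ (fun y => ‖∇ u y‖ ^ 2) x) x :=
    (hF'.hasDerivAt.comp_hasFDerivAt x hu'.hasFDerivAt).fun_sub (h_norm.hasFDerivAt.const_mul _)
  have h_density := hasFDerivAt_density.differentiableAt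
  have fderiv_inner : fderiv ℝ (fun y => ⟪y, ∇ u y⟫) x (∇ u x)
      = ⟪fderiv ℝ (∇ u) x (∇ u x), x⟫ + ‖∇ u x‖ ^ 2 := by
    rw [fderiv_inner_apply ℝ differentiableAt_fun_id hgrad, fderiv_fun_id,
      ContinuousLinearMap.id_apply, real_inner_self_eq_norm_sq, real_inner_comm]
  have fderiv_density : fderiv ℝ (fun y => F (u y) - 1 / 2 * ‖∇ u y‖ ^ 2) x x
      = deriv F (u x) * ⟪x, ∇ u x⟫ - ⟪fderiv ℝ (∇ u) x (∇ u x), x⟫ := by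
    rw [hasFDerivAt_density.fderiv, sub_apply, smul_apply, smul_apply,
      fderiv_norm_gradient_sq hu, ← inner_gradient_left, real_inner_comm (∇ u x), smul_eq_mul,
      smul_eq_mul]
    ring
  unfold pohozaevField
  rw [divergence_add (h_inner.fun_smul hgrad) (h_density.fun_smul differentiableAt_fun_id),
    divergence_smul h_inner hgrad, divergence_smul h_density differentiableAt_fun_id,
    divergence_gradient hu, divergence_id, fderiv_inner, fderiv_density]
  ring

variable [MeasurableSpace E] [BorelSpace E] {μ : Measure E} [μ.IsAddHaarMeasure] {u : E → ℝ}

theorem integral_norm_gradient_sq_eq_neg (hu : ContDiff ℝ 2 u)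
    (hu₂ : Integrable (fun x => u x ^ 2) μ) (hgrad : Integrable (fun x => ‖∇ u x‖ ^ 2) μ)
    (hlap : Integrable (fun x => u x * Δ u x) μ) :
    ∫ x, ‖∇ u x‖ ^ 2 ∂μ = -∫ x, u x * Δ u x ∂μ := by
  have hV : ContDiff ℝ 1 fun x => u x • ∇ u x := (hu.of_le one_le_two).smul (contDiff_gradient hu)
  have hdiv : divergence (fun x => u x • ∇ u x) = fun x => ‖∇ u x‖ ^ 2 + u x * Δ u x :=
    funext (divergence_smul_gradient hu)
  have hint : Integrable (fun x => ‖u x • ∇ u x‖ / (1 + ‖x‖)) μ := by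
    refine (hu₂.add hgrad).mono' (Continuous.aestronglyMeasurable ?_) (ae_of_all _ fun x => ?_)
    · exact hV.continuous.norm.div (by fun_prop) fun x => by positivity
    · rw [Real.norm_of_nonneg (by positivity)]
      calc ‖u x • ∇ u x‖ / (1 + ‖x‖) ≤ ‖u x‖ * ‖∇ u x‖ := by
            rw [norm_smul]
            exact div_le_self (by positivity) (le_add_of_nonneg_right (norm_nonneg x))
        _ ≤ u x ^ 2 + ‖∇ u x‖ ^ 2 := by
            rw [← sq_abs (u x), ← Real.norm_eq_abs]
            linarith [two_mul_le_add_sq ‖u x‖ ‖∇ u x‖,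
              mul_nonneg (norm_nonneg (u x)) (norm_nonneg (∇ u x))]
  have h := integral_divergence_eq_zero hV hint (hdiv ▸ hgrad.add hlap)
  rw [hdiv, integral_add hgrad hlap] at h
  exact eq_neg_of_add_eq_zero_left h

theorem pohozaev_identity {F : ℝ → ℝ} (hF : ContDiff ℝ 1 F) (hu : ContDiff ℝ 2 u)
    (hpde : ∀ x, Δ u x + deriv F (u x) = 0) (hgrad : Integrable (fun x => ‖∇ u x‖ ^ 2) μ)
    (hFu : Integrable (fun x => F (u x)) μ) :
    (finrank ℝ E - 2) / 2 * ∫ x, ‖∇ u x‖ ^ 2 ∂μ = finrank ℝ E * ∫ x, F (u x) ∂μ := by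
  have hV : ContDiff ℝ 1 (pohozaevField F u) := contDiff_pohozaevField hF hu
  have hdiv : divergence (pohozaevField F u)
      = fun x => (1 - finrank ℝ E / 2) * ‖∇ u x‖ ^ 2 + finrank ℝ E * F (u x) := by
    ext x
    rw [divergence_pohozaevField hF hu, hpde, mul_zero, add_zero]
  have hint : Integrable (fun x => ‖pohozaevField F u x‖ / (1 + ‖x‖)) μ := by
    refine (hFu.norm.add (hgrad.const_mul (3 / 2))).mono' (Continuous.aestronglyMeasurable ?_)
      (ae_of_all _ fun x => ?_)
    · exact hV.continuous.norm.div (by fun_prop) fun x => by positivity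
    · rw [Real.norm_of_nonneg (by positivity)]
      calc ‖pohozaevField F u x‖ / (1 + ‖x‖)
          ≤ (‖F (u x)‖ + 3 / 2 * ‖∇ u x‖ ^ 2) * (‖x‖ / (1 + ‖x‖)) := by
            rw [← mul_div_assoc]
            gcongr
            exact norm_pohozaevField_le F u x
        _ ≤ ‖F (u x)‖ + 3 / 2 * ‖∇ u x‖ ^ 2 :=
            mul_le_of_le_one_right (by positivity)
              ((div_le_one (by positivity)).2 (le_add_of_nonneg_left zero_le_one))
  have h := integral_divergence_eq_zero hV hint
    (hdiv ▸ (hgrad.const_mul _).add (hFu.const_mul _))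
  rw [hdiv, integral_add (hgrad.const_mul _) (hFu.const_mul _), integral_const_mul,
    integral_const_mul] at h
  linear_combination -h

theorem integral_norm_gradient_sq_of_cubic (hu : ContDiff ℝ 2 u)
    (hu₂ : Integrable (fun x => u x ^ 2) μ) (hgrad : Integrable (fun x => ‖∇ u x‖ ^ 2) μ)
    (hu₄ : Integrable (fun x => u x ^ 4) μ) (hpde : ∀ x, -Δ u x + u x - u x ^ 3 = 0) :
    ∫ x, ‖∇ u x‖ ^ 2 ∂μ = ∫ x, u x ^ 4 ∂μ - ∫ x, u x ^ 2 ∂μ := by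
  have hlap : (fun x => u x * Δ u x) = fun x => u x ^ 2 - u x ^ 4 :=
    funext fun x => by linear_combination -u x * hpde x
  rw [integral_norm_gradient_sq_eq_neg hu hu₂ hgrad (hlap ▸ hu₂.sub hu₄), hlap,
    integral_sub hu₂ hu₄, neg_sub]

theorem integral_pow_four_of_cubic (hdim : finrank ℝ E = 2) (hu : ContDiff ℝ 2 u)
    (hu₂ : Integrable (fun x => u x ^ 2) μ) (hgrad : Integrable (fun x => ‖∇ u x‖ ^ 2) μ)
    (hu₄ : Integrable (fun x => u x ^ 4) μ) (hpde : ∀ x, -Δ u x + u x - u x ^ 3 = 0) :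
    ∫ x, u x ^ 4 ∂μ = 2 * ∫ x, u x ^ 2 ∂μ := by
  let F (t : ℝ) : ℝ := t ^ 4 / 4 - t ^ 2 / 2
  have hderiv (t : ℝ) : deriv F t = t ^ 3 - t := by
    have h : HasDerivAt F (4 * t ^ 3 / 4 - 2 * t / 2) t := by
      simpa using ((hasDerivAt_pow 4 t).div_const 4).fun_sub ((hasDerivAt_pow 2 t).div_const 2)
    rw [h.deriv]
    ring
  have h := pohozaev_identity (F := F) (by fun_prop) hu
    (fun x => by linear_combination hderiv (u x) - hpde x) hgrad
    ((hu₄.div_const 4).sub (hu₂.div_const 2))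
  rw [integral_sub (hu₄.div_const 4) (hu₂.div_const 2), integral_div, integral_div, hdim] at h
  push_cast at h
  linear_combination -2 * h

theorem neg_integral_sq_le_of_gagliardoNirenbergEnergy_nonneg (hdim : finrank ℝ E = 2)
    (hu₀ : u ≠ 0) (hu : ContDiff ℝ 2 u) (hu₂ : Integrable (fun x => u x ^ 2) μ)
    (hgrad : Integrable (fun x => ‖∇ u x‖ ^ 2) μ) (hu₄ : Integrable (fun x => u x ^ 4) μ)
    (hpde : ∀ x, -Δ u x + u x - u x ^ 3 = 0) {c : ℝ}
    (henergy : 0 ≤ gagliardoNirenbergEnergy μ c u) :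
    -∫ x, u x ^ 2 ∂μ ≤ c := by
  have hu₂_pos : 0 < ∫ x, u x ^ 2 ∂μ := by
    obtain ⟨x, hx⟩ := Function.ne_iff.1 hu₀
    exact integral_pos_of_integrable_nonneg_nonzero (hu.continuous.pow 2) hu₂
      (fun x => sq_nonneg _) (pow_ne_zero 2 hx)
  have h : 0 ≤ (∫ x, u x ^ 2 ∂μ) * (∫ x, u x ^ 2 ∂μ + c) := by
    simp only [gagliardoNirenbergEnergy, ← norm_gradient] at henergy
    rw [integral_norm_gradient_sq_of_cubic hu hu₂ hgrad hu₄ hpde,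
      integral_pow_four_of_cubic hdim hu hu₂ hgrad hu₄ hpde] at henergy
    linarith
  linarith [nonneg_of_mul_nonneg_right h hu₂_pos]

end Virial

theorem stmt_12_general {E : Type*} [NormedAddCommGroup E] [InnerProductSpace ℝ E]
    [FiniteDimensional ℝ E] [MeasurableSpace E] [BorelSpace E] {μ : Measure E} [μ.IsAddHaarMeasure]
    (hdim : finrank ℝ E = 2) {Q : E → ℝ} (hQ₀ : Q ≠ 0) (hQ : ContDiff ℝ 2 Q)
    (hQ₂ : Integrable (fun x => Q x ^ 2) μ) (hQgrad : Integrable (fun x => ‖∇ Q x‖ ^ 2) μ)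
    (hQ₄ : Integrable (fun x => Q x ^ 4) μ) (hpde : ∀ x, -Δ Q x + Q x - Q x ^ 3 = 0)
    {w : E → ℝ} (hw : Integrable w μ)
    (hstab : ∀ u : E → ℝ, ContDiff ℝ ∞ u → HasCompactSupport u →
      0 ≤ (∫ x, u x ^ 2 ∂μ) * (∫ x, ‖∇ u x‖ ^ 2 ∂μ)
        + (1 / 2) * ∫ x, ∫ y, u x ^ 2 * u y ^ 2 * w (x - y) ∂μ ∂μ) :
    -∫ x, Q x ^ 2 ∂μ ≤ ∫ x, w x ∂μ := by
  simp only [norm_gradient] at hstab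
  have hQ₁ : ContDiff ℝ 1 Q := hQ.of_le one_le_two
  have memLp_four : MemLp Q 4 μ :=
    (memLp_natCast_iff_integrable_norm_pow hQ.continuous.aestronglyMeasurable four_ne_zero).2
      (by simpa only [norm_pow] using hQ₄.norm)
  have memLp_fderiv : MemLp (fderiv ℝ Q) 2 μ :=
    (memLp_two_iff_integrable_sq_norm
      (hQ₁.continuous_fderiv one_ne_zero).aestronglyMeasurable).2
      (by simpa only [norm_gradient] using hQgrad)
  have energy_nonneg : 0 ≤ gagliardoNirenbergEnergy μ (∫ x, w x ∂μ) Q :=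
    gagliardoNirenbergEnergy_nonneg_of_memLp
      (fun _ => gagliardoNirenbergEnergy_nonneg_of_contDiff_one
        fun _ => gagliardoNirenbergEnergy_nonneg_of_stable hdim hw hstab) hQ₁
      ((memLp_two_iff_integrable_sq hQ.continuous.aestronglyMeasurable).2 hQ₂) memLp_four
      memLp_fderiv
  exact neg_integral_sq_le_of_gagliardoNirenbergEnergy_nonneg hdim hQ₀ hQ hQ₂ hQgrad hQ₄ hpde
    energy_nonneg

theorem lap2_eq_laplacian {f : EuclideanSpace ℝ (Fin 2) → ℝ} (hf : ContDiff ℝ 2 f) :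
    lap2 f = Δ f := by
  ext x
  have hf' : DifferentiableAt ℝ (fderiv ℝ f) x :=
    (hf.fderiv_right (m := 1) (by norm_num)).differentiable one_ne_zero x
  rw [InnerProductSpace.laplacian_eq_iteratedFDeriv_orthonormalBasis f
    (EuclideanSpace.basisFun (Fin 2) ℝ)]
  refine Finset.sum_congr rfl fun i _ => ?_
  rw [fderiv_clm_apply hf' (differentiableAt_const _), iteratedFDeriv_two_apply]
  simp

/-- If the 2D many-body stability condition
`‖u‖² ‖∇u‖² + (1/2) ∬ |u(x)|²|u(y)|² w(x−y) > 0` holds for all nonzero test functions `u`,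
then `∫ w ≥ −a*`, where `a* = ‖Q‖²_{L²}` is the critical coupling constant of the 2D cubic
NLS, `Q` being the positive radial solution of `−ΔQ + Q − Q³ = 0`. -/
theorem stmt_12 (Q : EuclideanSpace ℝ (Fin 2) → ℝ)
    (hQpos : ∀ x, 0 < Q x)
    (hQrad : ∀ x y : EuclideanSpace ℝ (Fin 2), ‖x‖ = ‖y‖ → Q x = Q y)
    (hQsmooth : ContDiff ℝ 2 Q)
    (hQL2 : Integrable (fun x => Q x ^ 2))
    (hQgrad : Integrable (fun x => ‖gradient Q x‖ ^ 2))
    (hQ4 : Integrable (fun x => Q x ^ 4))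
    (hpde : ∀ x, -lap2 Q x + Q x - Q x ^ 3 = 0)
    (astar : ℝ) (hastar : astar = ∫ x, Q x ^ 2)
    (w : EuclideanSpace ℝ (Fin 2) → ℝ) (hw : Integrable w)
    (hwe : ∀ x, w (-x) = w x)
    (hstab : ∀ u : EuclideanSpace ℝ (Fin 2) → ℝ, ContDiff ℝ (⊤ : ℕ∞) u →
      HasCompactSupport u → u ≠ 0 →
      0 < (∫ x, u x ^ 2) * (∫ x, ‖gradient u x‖ ^ 2)
        + (1 / 2) * ∫ x, ∫ y, u x ^ 2 * u y ^ 2 * w (x - y)) :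
    -astar ≤ ∫ x, w x := by
  rw [hastar]
  rw [lap2_eq_laplacian hQsmooth] at hpde
  exact stmt_12_general finrank_euclideanSpace_fin (ne_of_apply_ne (· 0) (hQpos 0).ne') hQsmooth
    hQL2 hQgrad hQ4 hpde hw fun u hu hc =>
      (eq_or_ne u 0).elim (fun h => by simp [h]) fun h => (hstab u hu hc h).le
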